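/- For every integer n ≥ 1, the number of partitions of n in which the largest part occurs exactly four times and all other parts are distinct satisfies ℓ_4(n) + q(n+5) + q(n+4) + q(n) = q(n+6) + q(n+2) + q(n+1); equivalently, ℓ_4(n) = q(n+6) − q(n+5) − q(n+4) + q(n+2) + q(n+1) − q(n). In particular, q(n) + q(n+4) + q(n+5) ≤ q(n+1) + q(n+2) + q(n+6). -/

import Mathlib

/-!
The identity follows from the recurrence `ℓ_{k+1}(n) + ℓ_k(n) = ℓ_k(n + k)` for `k, n ≥ 1`
(`l_rec`), applied for `k = 1, 2, 3`, and from `ℓ_1 = q` on positive integers (`l_one`).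

The recurrence is bijective: take a partition of `n + k` whose largest part `m` occurs `k` times
and whose other parts are distinct, and lower each copy of `m` by one. The result is a partition
of `n` with largest part `m - 1`, which occurs `k + 1` or `k` times according to whether `m - 1`
was already a part. The case `m = 1` does not arise, since then the partition would have size `k`,
contradicting `n ≥ 1`.

To carry this out, such a partition is recorded as the pair `(m, S)` of its largest part and the
finite set of its other parts (`pairs`, `l_eq_card`).
-/

/-- `q n` is the number of partitions of `n` into distinct parts. -/
noncomputable def q (n : ℕ) : ℕ := Nat.card {p : n.Partition // p.parts.Nodup}

/-- A partition has its smallest part repeated exactly `k` times and all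
other parts occurring exactly once. -/
def IsSmallestRep (k : ℕ) {n : ℕ} (p : n.Partition) : Prop :=
  ∃ m ∈ p.parts, (∀ a ∈ p.parts, m ≤ a) ∧ p.parts.count m = k ∧
    ∀ a ∈ p.parts, a ≠ m → p.parts.count a = 1

/-- `s k n` counts partitions of `n` whose smallest part occurs exactly `k`
times and whose other parts are distinct. -/
noncomputable def s (k n : ℕ) : ℕ := Nat.card {p : n.Partition // IsSmallestRep k p}

/-- A partition has its largest part repeated exactly `k` times and all
other parts occurring exactly once. -/
def IsLargestRep (k : ℕ) {n : ℕ} (p : n.Partition) : Prop :=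
  ∃ m ∈ p.parts, (∀ a ∈ p.parts, a ≤ m) ∧ p.parts.count m = k ∧
    ∀ a ∈ p.parts, a ≠ m → p.parts.count a = 1

/-- `l k n` counts partitions of `n` whose largest part occurs exactly `k`
times and whose other parts are distinct. -/
noncomputable def l (k n : ℕ) : ℕ := Nat.card {p : n.Partition // IsLargestRep k p}

/-- The pairs `(m, S)` with `m ≥ 1`, `S ⊆ {1, …, m - 1}` and `k * m + ∑ S = n`: the encodings of
the partitions of `n` with largest part `m` occurring `k` times and other parts forming the
set `S`. -/
def pairs (k n : ℕ) : Set (ℕ × Finset ℕ) :=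
  {x | 1 ≤ x.1 ∧ (∀ a ∈ x.2, 1 ≤ a ∧ a < x.1) ∧ k * x.1 + ∑ a ∈ x.2, a = n}

lemma pairs_finite (k n : ℕ) (hk : 1 ≤ k) : (pairs k n).Finite := by
  refine Set.Finite.subset
    (Finset.finite_toSet (Finset.range (n + 1) ×ˢ (Finset.range (n + 1)).powerset)) ?_
  rintro ⟨m, S⟩ ⟨h1, h2, h3⟩
  simp only at h1 h2 h3
  have hm : m ≤ n := by
    have := Nat.le_mul_of_pos_left m hk
    omega
  simp only [Finset.coe_product, Set.mem_prod, Finset.mem_coe, Finset.mem_range,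
    Finset.mem_powerset]
  refine ⟨by omega, fun a ha => ?_⟩
  have := h2 a ha
  simp only [Finset.mem_range]
  omega

lemma count_pair (k m : ℕ) (S : Finset ℕ) (a : ℕ) :
    (Multiset.replicate k m + S.val).count a
      = (if a = m then k else 0) + if a ∈ S then 1 else 0 := by
  rw [Multiset.count_add, Multiset.count_replicate, Multiset.count_eq_of_nodup S.nodup]
  simp [eq_comm]

/-- The partition encoded by a pair. -/
def toPartition (k n : ℕ) (x : pairs k n) : n.Partition where
  parts := Multiset.replicate k x.1.1 + x.1.2.val
  parts_pos := by
    obtain ⟨⟨m, S⟩, h1, h2, h3⟩ := x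
    intro i hi
    rcases Multiset.mem_add.1 hi with h | h
    · rw [Multiset.eq_of_mem_replicate h]
      exact h1
    · exact (h2 i h).1
  parts_sum := by
    obtain ⟨⟨m, S⟩, h1, h2, h3⟩ := x
    simpa [Finset.sum_val] using h3

lemma toPartition_isLargestRep (k n : ℕ) (hk : 1 ≤ k) (x : pairs k n) :
    IsLargestRep k (toPartition k n x) := by
  obtain ⟨⟨m, S⟩, h1, h2, h3⟩ := x
  simp only at h1 h2 h3
  have hmS : m ∉ S := fun h => lt_irrefl _ (h2 m h).2
  refine ⟨m, ?_, ?_, ?_, ?_⟩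
  · exact Multiset.mem_add.2 (Or.inl (Multiset.mem_replicate.2 ⟨by omega, rfl⟩))
  · intro a ha
    rcases Multiset.mem_add.1 ha with h | h
    · exact (Multiset.eq_of_mem_replicate h).le
    · exact (h2 a h).2.le
  · simp only [toPartition, count_pair]
    simp [hmS]
  · intro a ha ham
    have haS : a ∈ S := by
      rcases Multiset.mem_add.1 ha with h | h
      · exact absurd (Multiset.eq_of_mem_replicate h) ham
      · exact h
    simp only [toPartition, count_pair]
    simp [ham, haS]

lemma l_eq_card (k n : ℕ) (hk : 1 ≤ k) : l k n = (pairs k n).ncard := by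
  symm
  rw [l, ← Nat.card_coe_set_eq]
  refine Nat.card_eq_of_bijective
    (fun x : pairs k n => (⟨toPartition k n x, toPartition_isLargestRep k n hk x⟩ :
      {p : n.Partition // IsLargestRep k p})) ⟨?_, ?_⟩
  · rintro ⟨⟨m, S⟩, h1, h2, h3⟩ ⟨⟨m', S'⟩, h1', h2', h3'⟩ h
    simp only at h1 h2 h3 h1' h2' h3'
    have hp : Multiset.replicate k m + S.val = Multiset.replicate k m' + S'.val :=
      congrArg (fun p => p.1.parts) h
    have hc : ∀ a, ((if a = m then k else 0) + if a ∈ S then 1 else 0)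
        = (if a = m' then k else 0) + if a ∈ S' then 1 else 0 := fun a => by
      rw [← count_pair, ← count_pair, hp]
    -- either largest part is the maximum of the common multiset of parts
    have hmm : m = m' := by
      by_contra hne
      have e1 := hc m
      have e2 := hc m'
      have i1 : m ∈ S' := by
        by_contra hh
        simp [hne, hh] at e1
        omega
      have i2 : m' ∈ S := by
        by_contra hh
        simp [Ne.symm hne, hh] at e2
        omega
      have := (h2' m i1).2
      have := (h2 m' i2).2
      omega
    subst hmm
    have hS : S = S' := Finset.val_injective (add_left_cancel hp)
    subst hS
    rfl
  · rintro ⟨p, m, hm, hmax, hcm, hoth⟩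
    have key : Multiset.replicate k m + (p.parts.toFinset.erase m).val = p.parts := by
      ext a
      rw [count_pair]
      by_cases ham : a = m
      · subst ham
        simp [hcm]
      · by_cases hap : a ∈ p.parts
        · simp [ham, hap, hoth a hap ham]
        · simp [ham, hap]
    have hsum := congrArg Multiset.sum key
    rw [p.parts_sum, Multiset.sum_add, Multiset.sum_replicate, Finset.sum_val, smul_eq_mul] at hsum
    refine ⟨⟨(m, p.parts.toFinset.erase m), p.parts_pos hm, ?_, hsum⟩, ?_⟩
    · intro a ha
      obtain ⟨h1, h2⟩ := Finset.mem_erase.1 ha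
      have h2 := Multiset.mem_toFinset.1 h2
      exact ⟨p.parts_pos h2, lt_of_le_of_ne (hmax a h2) h1⟩
    · exact Subtype.ext (Nat.Partition.ext key)

/-- Every pair for `(k, n + k)` arises by raising the largest part of exactly one pair: one for
`(k + 1, n)`, where one copy of the largest part is left as it is, or one for `(k, n)`. -/
lemma l_rec (k n : ℕ) (hk : 1 ≤ k) (hn : 1 ≤ n) : l (k + 1) n + l k n = l k (n + k) := by
  rw [l_eq_card _ _ hk, l_eq_card _ _ hk, l_eq_card (k + 1) n (by omega)]
  let f : ℕ × Finset ℕ → ℕ × Finset ℕ := fun x => (x.1 + 1, insert x.1 x.2)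
  let g : ℕ × Finset ℕ → ℕ × Finset ℕ := fun x => (x.1 + 1, x.2)
  have hf : Set.InjOn f (pairs (k + 1) n) := by
    rintro ⟨m, S⟩ ⟨h1, h2, h3⟩ ⟨m', S'⟩ ⟨h1', h2', h3'⟩ h
    simp only at h1 h2 h3 h1' h2' h3'
    obtain ⟨e1, e2⟩ := Prod.mk.inj h
    have e1 : m = m' := by simpa using e1
    subst e1
    have hmS : m ∉ S := fun h => lt_irrefl _ (h2 m h).2
    have hmS' : m ∉ S' := fun h => lt_irrefl _ (h2' m h).2
    have e3 := congrArg (fun T => Finset.erase T m) e2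
    simp only [Finset.erase_insert hmS, Finset.erase_insert hmS'] at e3
    rw [e3]
  have hg : Set.InjOn g (pairs k n) := by
    rintro ⟨m, S⟩ - ⟨m', S'⟩ - h
    obtain ⟨e1, e2⟩ := Prod.mk.inj h
    simp_all
  have hunion : pairs k (n + k) = f '' pairs (k + 1) n ∪ g '' pairs k n := by
    ext ⟨m, S⟩
    constructor
    · rintro ⟨h1, h2, h3⟩
      simp only at h1 h2 h3
      have hm2 : m ≠ 1 := by
        rintro rfl
        have hS : S = ∅ := Finset.eq_empty_of_forall_notMem fun a ha => by
          have := h2 a ha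
          omega
        subst hS
        simp at h3
        omega
      obtain ⟨m, rfl⟩ : ∃ t, m = t + 1 := ⟨m - 1, by omega⟩
      by_cases hmS : m ∈ S
      · refine Or.inl ⟨(m, S.erase m), ⟨by simp only; omega, ?_, ?_⟩, ?_⟩
        · intro a ha
          obtain ⟨ha1, ha2⟩ := Finset.mem_erase.1 ha
          have := h2 a ha2
          simp only
          omega
        · have := Finset.add_sum_erase S (fun a => a) hmS
          simp only at this ⊢
          nlinarith
        · simp [f, Finset.insert_erase hmS]
      · refine Or.inr ⟨(m, S), ⟨by simp only; omega, ?_, ?_⟩, rfl⟩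
        · intro a ha
          have := h2 a ha
          have : a ≠ m := fun h => hmS (h ▸ ha)
          simp only
          omega
        · simp only
          nlinarith
    · rintro (⟨⟨m', S'⟩, ⟨h1, h2, h3⟩, h⟩ | ⟨⟨m', S'⟩, ⟨h1, h2, h3⟩, h⟩) <;>
        simp only at h1 h2 h3 <;> rw [← h]
      · have hmS : m' ∉ S' := fun h => lt_irrefl _ (h2 m' h).2
        refine ⟨by simp [f], ?_, ?_⟩
        · intro a ha
          rcases Finset.mem_insert.1 ha with rfl | ha
          · simp only [f]
            omega
          · have := h2 a ha
            simp only [f]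
            omega
        · simp only [f, Finset.sum_insert hmS]
          nlinarith
      · refine ⟨by simp [g], ?_, ?_⟩
        · intro a ha
          have := h2 a ha
          simp only [g]
          omega
        · simp only [g]
          nlinarith
  -- the two images differ in whether the largest part minus one is a part
  have hdisj : Disjoint (f '' pairs (k + 1) n) (g '' pairs k n) := by
    rw [Set.disjoint_left]
    rintro _ ⟨⟨m, S⟩, -, rfl⟩ ⟨⟨m', S'⟩, ⟨h1, h2, h3⟩, h⟩
    obtain ⟨e1, e2⟩ := Prod.mk.inj h
    have e1 : m' = m := by simpa using e1
    subst e1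
    simp only at h2 e2
    have : m' ∈ S' := by
      rw [e2]
      exact Finset.mem_insert_self _ _
    exact lt_irrefl _ (h2 m' this).2
  rw [hunion, Set.ncard_union_eq hdisj ((pairs_finite _ _ (by omega)).image f)
    ((pairs_finite _ _ hk).image g), hf.ncard_image, hg.ncard_image]

/-- For `n = 0` this fails: the empty partition is counted by `q` but has no largest part. -/
lemma l_one (n : ℕ) (hn : 1 ≤ n) : l 1 n = q n := by
  rw [l, q]
  refine Nat.card_congr (Equiv.subtypeEquivRight fun p => ?_)
  constructor
  · rintro ⟨m, hm, hmax, hcm, hoth⟩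
    rw [Multiset.nodup_iff_count_le_one]
    intro a
    by_cases hap : a ∈ p.parts
    · by_cases ham : a = m
      · rw [ham, hcm]
      · rw [hoth a hap ham]
    · simp [hap]
  · intro h
    have hne : p.parts.toFinset.Nonempty := by
      rw [Multiset.toFinset_nonempty]
      intro h0
      have := p.parts_sum
      rw [h0] at this
      simp at this
      omega
    refine ⟨p.parts.toFinset.max' hne, Multiset.mem_toFinset.1 (Finset.max'_mem _ _),
      fun a ha => Finset.le_max' _ _ (Multiset.mem_toFinset.2 ha),
      Multiset.count_eq_one_of_mem h (Multiset.mem_toFinset.1 (Finset.max'_mem _ _)),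
      fun a ha _ => Multiset.count_eq_one_of_mem h ha⟩

theorem l4_eq (n : ℕ) (hn : 1 ≤ n) :
    l 4 n + q (n + 5) + q (n + 4) + q n = q (n + 6) + q (n + 2) + q (n + 1) ∧
      q n + q (n + 4) + q (n + 5) ≤ q (n + 1) + q (n + 2) + q (n + 6) := by
  have h2 : ∀ j, 1 ≤ j → l 2 j + q j = q (j + 1) := fun j hj => by
    rw [← l_one j hj, ← l_one (j + 1) (by omega)]
    exact l_rec 1 j le_rfl hj
  have a0 := h2 n hn
  have a2 := h2 (n + 2) (by omega)
  have a3 := h2 (n + 3) (by omega)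
  have a5 := h2 (n + 5) (by omega)
  have b0 : l 3 n + l 2 n = l 2 (n + 2) := l_rec 2 n (by omega) hn
  have b3 : l 3 (n + 3) + l 2 (n + 3) = l 2 (n + 5) := l_rec 2 (n + 3) (by omega) (by omega)
  have c0 : l 4 n + l 3 n = l 3 (n + 3) := l_rec 3 n (by omega) hn
  simp only [Nat.add_assoc, Nat.reduceAdd] at a0 a2 a3 a5
  omega
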